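/- arXiv:2202.11735 — 2 statements merged into one kernel-verified Lean document; each statement's English description precedes it below -/
import Mathlib

section
/- Let C > 0 be a constant, let X be an ℝ^d random vector, and set X̃ = X with d̃ = d if X has no intercept, and X̃ equal to the last d−1 coordinates of X with d̃ = d−1 if X = (1, (X^{(-1)})')'. Assume d̃ ≥ 1 and that X̃ has a Lebesgue density p_{X̃} on ℝ^{d̃}. Then: (i) if ‖X‖ ≤ √d·m_X almost surely, d is fixed, and p_{X̃} is bounded above by C, there exists a constant ℓ_1 ∈ (0,1), depending only on C, m_X and d, such that P(|u'X| ≤ ℓ_1) ≤ 1/4 for every unit vector u ∈ ℝ^d; (ii) if p_{X̃} is log-concave, ‖E[X̃]‖ ≤ C, and all eigenvalues of Cov(X̃) lie in [C^{-1}, C], there exists a constant ℓ_1 ∈ (0,1), depending only on C, such that P(|u'X| ≤ ℓ_1) ≤ 1/4 for every unit vector u ∈ ℝ^d. -/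
open MeasureTheory Matrix

noncomputable section

/-- The Euclidean norm of a vector in `Fin d → ℝ`. -/
def eNorm {d : ℕ} (x : Fin d → ℝ) : ℝ := Real.sqrt (∑ i, x i ^ 2)

/-- A nonnegative function `p` on `ℝ^d` is log-concave. -/
def IsLogConcaveFn {d : ℕ} (p : (Fin d → ℝ) → ℝ) : Prop :=
  ∀ x y : Fin d → ℝ, ∀ t : ℝ, 0 ≤ t → t ≤ 1 →
    p x ^ t * p y ^ (1 - t) ≤ p (t • x + (1 - t) • y)

/-!
A unit vector `(c, v)` with small `v` has `|c|` close to `1`, and then `c + ⟪v, X⟫` can only be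
small if the marginal of `X` in direction `v` is large; otherwise `c + ⟪v, X⟫` is a rescaled shift
of that marginal. So it suffices to bound shifted small-ball probabilities and tails of the
one-dimensional marginals. If `X` is bounded with bounded density, the former is the volume of a
slab in a ball.

If `X` has a log-concave density, its law satisfies the Prékopa–Leindler inequality, and so do its
marginals. For such a law `ν` on the line, mass `θ` on an interval `[t - l, t + l]` forces the tail
`ν {|y - t| > x} ≤ 2 exp (-θ x / 2 l)`, whence `θ² ∫ (y - t)² dν ≤ 16 l²`. The left side is at least
`θ²` times the variance, so a lower bound on the variance makes `θ` small with `l`, independently of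
the dimension. The tails are controlled by Chebyshev's inequality.
-/

open ProbabilityTheory
open scoped ENNReal Pointwise RealInnerProductSpace

-- With `a = max K` and `b = min L`, the translates `b + K` and `a + L` both lie in `K + L` and meet
-- only at `a + b`.
lemma volume_add_volume_le_volume_add_of_isCompact {K L : Set ℝ} (hK : IsCompact K)
    (hL : IsCompact L) (hK₀ : K.Nonempty) (hL₀ : L.Nonempty) :
    volume K + volume L ≤ volume (K + L) := by
  obtain ⟨a, haK, ha⟩ := hK.exists_isGreatest hK₀
  obtain ⟨b, hbL, hb⟩ := hL.exists_isLeast hL₀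
  have h_inter : (b +ᵥ K) ∩ (a +ᵥ L) ⊆ {a + b} := by
    rintro _ ⟨⟨x, hx, rfl⟩, y, hy, hxy⟩
    have hxa := ha hx
    have hby := hb hy
    simp only [vadd_eq_add, Set.mem_singleton_iff] at hxy ⊢
    linarith
  calc volume K + volume L = volume (b +ᵥ K) + volume (a +ᵥ L) := by simp only [measure_vadd]
    _ = volume ((b +ᵥ K) ∪ (a +ᵥ L)) :=
      (measure_union₀ (hL.measurableSet.const_vadd a).nullMeasurableSet
        (measure_mono_null h_inter (by simp))).symm
    _ ≤ volume (K + L) := by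
      refine measure_mono (Set.union_subset ?_ ?_)
      · rintro _ ⟨x, hx, rfl⟩
        exact ⟨x, hx, b, hbL, add_comm _ _⟩
      · rintro _ ⟨y, hy, rfl⟩
        exact ⟨a, haK, y, hy, rfl⟩

lemma volume_add_volume_le_volume_add {A B : Set ℝ} (hA : MeasurableSet A) (hB : MeasurableSet B)
    (hA₀ : A.Nonempty) (hB₀ : B.Nonempty) : volume A + volume B ≤ volume (A + B) := by
  obtain ⟨x, hx⟩ := hA₀
  obtain ⟨y, hy⟩ := hB₀
  have h_compact : ∀ K, K ⊆ A ∧ IsCompact K → ∀ L, L ⊆ B ∧ IsCompact L →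
      volume K + volume L ≤ volume (A + B) := by
    rintro K ⟨hKA, hK⟩ L ⟨hLB, hL⟩
    calc volume K + volume L ≤ volume (insert x K) + volume (insert y L) := by
          gcongr <;> exact Set.subset_insert _ _
      _ ≤ volume (insert x K + insert y L) :=
        volume_add_volume_le_volume_add_of_isCompact (hK.insert x) (hL.insert y)
          (Set.insert_nonempty _ _) (Set.insert_nonempty _ _)
      _ ≤ volume (A + B) := by
        gcongr
        · exact Set.insert_subset hx hKA
        · exact Set.insert_subset hy hLB
  rw [hA.measure_eq_iSup_isCompact, hB.measure_eq_iSup_isCompact]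
  simpa only [iSup_and] using
    ENNReal.biSup_add_biSup_le' ⟨∅, by simp⟩ ⟨∅, by simp⟩ h_compact

lemma ofReal_mul_volume_add_le {A B S : Set ℝ} {a b : ℝ} (ha : 0 < a) (hb : 0 < b)
    (hA : MeasurableSet A) (hB : MeasurableSet B) (hA₀ : A.Nonempty) (hB₀ : B.Nonempty)
    (hS : a • A + b • B ⊆ S) :
    ENNReal.ofReal a * volume A + ENNReal.ofReal b * volume B ≤ volume S := by
  have volume_smul {c : ℝ} (hc : 0 < c) (s : Set ℝ) :
      volume (c • s) = ENNReal.ofReal c * volume s := by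
    simp [Measure.addHaar_smul, abs_of_pos hc]
  rw [← volume_smul ha, ← volume_smul hb]
  exact (volume_add_volume_le_volume_add (hA.const_smul_of_ne_zero ha.ne')
    (hB.const_smul_of_ne_zero hb.ne') hA₀.smul_set hB₀.smul_set).trans (measure_mono hS)

lemma lintegral_eq_lintegral_meas_ofReal_lt {α : Type*} [MeasurableSpace α] {μ : Measure α}
    [SFinite μ] {f : α → ℝ≥0∞} (hf : Measurable f) :
    ∫⁻ x, f x ∂μ = ∫⁻ s in Set.Ioi (0 : ℝ), μ {x | ENNReal.ofReal s < f x} := by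
  have h_meas : MeasurableSet {z : α × ℝ | ENNReal.ofReal z.2 < f z.1} :=
    measurableSet_lt (by fun_prop) (by fun_prop)
  have h_fiber (c : ℝ≥0∞) :
      volume.restrict (Set.Ioi (0 : ℝ)) {s : ℝ | ENNReal.ofReal s < c} = c := by
    rw [Measure.restrict_apply (measurableSet_lt (by fun_prop) measurable_const)]
    induction c with
    | top => simp
    | coe c =>
      have : {s : ℝ | ENNReal.ofReal s < c} ∩ Set.Ioi 0 = Set.Ioo 0 (c : ℝ) := by
        ext s
        simp +contextual [ENNReal.ofReal_lt_coe_iff, and_comm, le_of_lt]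
      simp [this]
  calc ∫⁻ x, f x ∂μ
      = ∫⁻ x, volume.restrict (Set.Ioi (0 : ℝ)) {s : ℝ | ENNReal.ofReal s < f x} ∂μ := by
        simp only [h_fiber]
    _ = (μ.prod (volume.restrict (Set.Ioi (0 : ℝ)))) {z | ENNReal.ofReal z.2 < f z.1} :=
        (Measure.prod_apply h_meas).symm
    _ = ∫⁻ s in Set.Ioi (0 : ℝ), μ {x | ENNReal.ofReal s < f x} := Measure.prod_apply_symm h_meas

lemma rpow_mul_rpow_le_ofReal_mul_add {a b : ℝ} (ha : 0 < a) (hb : 0 < b) (hab : a + b = 1)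
    (x y : ℝ≥0∞) : x ^ a * y ^ b ≤ ENNReal.ofReal a * x + ENNReal.ofReal b * y := by
  have h := ENNReal.young_inequality (x ^ a) (y ^ b)
    (p := a⁻¹) (q := b⁻¹) (Real.holderConjugate_iff.2 ⟨(one_lt_inv₀ ha).2 (by linarith), by simpa⟩)
  simpa [← ENNReal.rpow_mul, ha.ne', hb.ne', ENNReal.ofReal_inv_of_pos, ha, hb, div_eq_mul_inv,
    mul_comm] using h

/-- The Prékopa–Leindler inequality for `μ`, the functional form of log-concavity of a measure. It
is stated for all weights and all measurable functions, so that it passes to products, linear images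
and log-concave densities. -/
def IsPrekopaLeindler {E : Type*} [AddCommGroup E] [Module ℝ E] [MeasurableSpace E]
    (μ : Measure E) : Prop :=
  ∀ ⦃a b : ℝ⦄, 0 < a → 0 < b → a + b = 1 → ∀ ⦃f g h : E → ℝ≥0∞⦄,
    Measurable f → Measurable g → Measurable h →
    (∀ x y, f x ^ a * g y ^ b ≤ h (a • x + b • y)) →
    (∫⁻ x, f x ∂μ) ^ a * (∫⁻ x, g x ∂μ) ^ b ≤ ∫⁻ x, h x ∂μ

section RealLine

variable {a b : ℝ} {f g h : ℝ → ℝ≥0∞}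

lemma ofReal_mul_lintegral_add_le_of_iSup_eq_one (ha : 0 < a) (hb : 0 < b) (hab : a + b = 1)
    (hf : Measurable f) (hg : Measurable g) (hh : Measurable h)
    (hf₁ : ⨆ x, f x = 1) (hg₁ : ⨆ x, g x = 1)
    (hfgh : ∀ x y, f x ^ a * g y ^ b ≤ h (a • x + b • y)) :
    ENNReal.ofReal a * (∫⁻ x, f x) + ENNReal.ofReal b * (∫⁻ x, g x) ≤ ∫⁻ x, h x := by
  rw [lintegral_eq_lintegral_meas_ofReal_lt hf, lintegral_eq_lintegral_meas_ofReal_lt hg,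
    lintegral_eq_lintegral_meas_ofReal_lt hh, ← lintegral_const_mul' _ _ ENNReal.ofReal_ne_top,
    ← lintegral_const_mul' _ _ ENNReal.ofReal_ne_top]
  refine (le_lintegral_add _ _).trans (lintegral_mono fun s => ?_)
  rcases lt_or_ge (ENNReal.ofReal s) 1 with hs | hs
  · obtain ⟨x₀, hx₀⟩ := lt_iSup_iff.1 (hf₁ ▸ hs)
    obtain ⟨y₀, hy₀⟩ := lt_iSup_iff.1 (hg₁ ▸ hs)
    refine ofReal_mul_volume_add_le ha hb (measurableSet_lt measurable_const hf)
      (measurableSet_lt measurable_const hg) ⟨x₀, hx₀⟩ ⟨y₀, hy₀⟩ ?_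
    rintro _ ⟨_, ⟨x, hx, rfl⟩, _, ⟨y, hy, rfl⟩, rfl⟩
    calc ENNReal.ofReal s = ENNReal.ofReal s ^ a * ENNReal.ofReal s ^ b := by
          rw [← ENNReal.rpow_add_of_nonneg _ _ ha.le hb.le, hab, ENNReal.rpow_one]
      _ < f x ^ a * g y ^ b :=
          ENNReal.mul_lt_mul (ENNReal.rpow_lt_rpow hx ha) (ENNReal.rpow_lt_rpow hy hb)
      _ ≤ h (a • x + b • y) := hfgh x y
  · have hf_empty : {x | ENNReal.ofReal s < f x} = ∅ :=
      Set.eq_empty_of_forall_notMem fun x hx => (hs.trans_lt hx).not_ge (hf₁ ▸ le_iSup f x)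
    have hg_empty : {x | ENNReal.ofReal s < g x} = ∅ :=
      Set.eq_empty_of_forall_notMem fun x hx => (hs.trans_lt hx).not_ge (hg₁ ▸ le_iSup g x)
    simp [hf_empty, hg_empty]

lemma lintegral_rpow_mul_le_of_iSup_ne_top (ha : 0 < a) (hb : 0 < b) (hab : a + b = 1)
    (hf : Measurable f) (hg : Measurable g) (hh : Measurable h)
    (hf_top : ⨆ x, f x ≠ ∞) (hg_top : ⨆ x, g x ≠ ∞)
    (hfgh : ∀ x y, f x ^ a * g y ^ b ≤ h (a • x + b • y)) :
    (∫⁻ x, f x) ^ a * (∫⁻ x, g x) ^ b ≤ ∫⁻ x, h x := by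
  set A := ⨆ x, f x
  set B := ⨆ x, g x
  by_cases hA : A = 0
  · simp [ENNReal.iSup_eq_zero.1 hA, ha]
  by_cases hB : B = 0
  · simp [ENNReal.iSup_eq_zero.1 hB, hb]
  have rpow_inv_mul (c : ℝ) (hc : 0 < c) (u v : ℝ≥0∞) : (u⁻¹ * v) ^ c = (u ^ c)⁻¹ * v ^ c := by
    rw [ENNReal.mul_rpow_of_nonneg _ _ hc.le, ENNReal.inv_rpow]
  set D := A ^ a * B ^ b
  have hD₀ : D ≠ 0 := by simp [D, hA, hB, hf_top, hg_top]
  have hD_top : D ≠ ∞ :=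
    ENNReal.mul_ne_top (ENNReal.rpow_ne_top_of_nonneg ha.le hf_top)
      (ENNReal.rpow_ne_top_of_nonneg hb.le hg_top)
  have hD_inv (u v : ℝ≥0∞) : (A⁻¹ * u) ^ a * (B⁻¹ * v) ^ b = D⁻¹ * (u ^ a * v ^ b) := by
    rw [rpow_inv_mul a ha, rpow_inv_mul b hb, mul_mul_mul_comm,
      ENNReal.mul_inv (.inl (by simp [hA, hf_top])) (.inr (by simp [hB, hg_top]))]
  have h_normalized := ofReal_mul_lintegral_add_le_of_iSup_eq_one ha hb hab
    (hf.const_mul A⁻¹) (hg.const_mul B⁻¹) (hh.const_mul D⁻¹)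
    (by rw [← ENNReal.mul_iSup, ENNReal.inv_mul_cancel hA hf_top])
    (by rw [← ENNReal.mul_iSup, ENNReal.inv_mul_cancel hB hg_top])
    (fun x y => by rw [hD_inv]; gcongr; exact hfgh x y)
  rw [lintegral_const_mul _ hf, lintegral_const_mul _ hg, lintegral_const_mul _ hh]
    at h_normalized
  have h_product := (rpow_mul_rpow_le_ofReal_mul_add ha hb hab _ _).trans h_normalized
  rwa [hD_inv, ENNReal.mul_le_mul_iff_right (ENNReal.inv_ne_zero.2 hD_top)
    (ENNReal.inv_ne_top.2 hD₀)] at h_product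

lemma lintegral_rpow_eq_iSup_lintegral_min {α : Type*} [MeasurableSpace α] (μ : Measure α)
    {f : α → ℝ≥0∞} (hf : Measurable f) {c : ℝ} (hc : 0 < c) :
    (∫⁻ x, f x ∂μ) ^ c = ⨆ n : ℕ, (∫⁻ x, min (f x) n ∂μ) ^ c := by
  have h_mono : Monotone fun (n : ℕ) x => min (f x) (n : ℝ≥0∞) := fun m n hmn x => by
    dsimp only; gcongr
  have h_iSup (x : α) : ⨆ n : ℕ, min (f x) n = f x := by
    rw [← inf_iSup_eq, ENNReal.iSup_natCast, inf_top_eq]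
  calc (∫⁻ x, f x ∂μ) ^ c = (⨆ n : ℕ, ∫⁻ x, min (f x) n ∂μ) ^ c := by
        rw [← lintegral_iSup (fun n => hf.min measurable_const) h_mono]
        simp only [h_iSup]
    _ = ⨆ n : ℕ, (∫⁻ x, min (f x) n ∂μ) ^ c := (ENNReal.orderIsoRpow c hc).map_iSup _

theorem isPrekopaLeindler_volume_real : IsPrekopaLeindler (volume : Measure ℝ) := by
  intro a b ha hb hab f g h hf hg hh hfgh
  have iSup_min_ne_top (u : ℝ → ℝ≥0∞) (n : ℕ) : ⨆ x, min (u x) n ≠ ∞ :=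
    ne_top_of_le_ne_top (ENNReal.natCast_ne_top n) (iSup_le fun x => min_le_right _ _)
  rw [lintegral_rpow_eq_iSup_lintegral_min _ hf ha, lintegral_rpow_eq_iSup_lintegral_min _ hg hb,
    ENNReal.iSup_mul]
  refine iSup_le fun m => ?_
  rw [ENNReal.mul_iSup]
  refine iSup_le fun n => lintegral_rpow_mul_le_of_iSup_ne_top ha hb hab
    (hf.min measurable_const) (hg.min measurable_const) hh (iSup_min_ne_top f m)
    (iSup_min_ne_top g n) fun x y => le_trans ?_ (hfgh x y)
  gcongr <;> exact min_le_left _ _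

end RealLine

namespace IsPrekopaLeindler

variable {E F : Type*} [AddCommGroup E] [Module ℝ E] [MeasurableSpace E] [AddCommGroup F]
  [Module ℝ F] [MeasurableSpace F] {μ : Measure E} {ν : Measure F}

lemma dirac (x : E) : IsPrekopaLeindler (Measure.dirac x) := by
  intro a b _ _ hab f g h hf hg hh hfgh
  simpa [lintegral_dirac' x, hf, hg, hh, ← add_smul, hab] using hfgh x x

lemma map (hμ : IsPrekopaLeindler μ) (L : E →ₗ[ℝ] F) (hL : Measurable L) :
    IsPrekopaLeindler (μ.map L) := by
  intro a b ha hb hab f g h hf hg hh hfgh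
  rw [lintegral_map hf hL, lintegral_map hg hL, lintegral_map hh hL]
  refine hμ ha hb hab (hf.comp hL) (hg.comp hL) (hh.comp hL) fun x y => ?_
  simpa only [Function.comp_apply, map_add, map_smul] using hfgh (L x) (L y)

lemma prod [SFinite ν] (hμ : IsPrekopaLeindler μ) (hν : IsPrekopaLeindler ν) :
    IsPrekopaLeindler (μ.prod ν) := by
  intro a b ha hb hab f g h hf hg hh hfgh
  rw [lintegral_prod _ hf.aemeasurable, lintegral_prod _ hg.aemeasurable,
    lintegral_prod _ hh.aemeasurable]
  refine hμ ha hb hab hf.lintegral_prod_right' hg.lintegral_prod_right' hh.lintegral_prod_right'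
    fun x y => ?_
  exact hν ha hb hab (hf.comp measurable_prodMk_left) (hg.comp measurable_prodMk_left)
    (hh.comp measurable_prodMk_left) fun x' y' => hfgh (x, x') (y, y')

lemma withDensity (hμ : IsPrekopaLeindler μ) {q : E → ℝ≥0∞} (hq : Measurable q)
    (hq_conc : ∀ ⦃a b : ℝ⦄, 0 < a → 0 < b → a + b = 1 → ∀ x y,
      q x ^ a * q y ^ b ≤ q (a • x + b • y)) :
    IsPrekopaLeindler (μ.withDensity q) := by
  intro a b ha hb hab f g h hf hg hh hfgh
  rw [lintegral_withDensity_eq_lintegral_mul _ hq hf,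
    lintegral_withDensity_eq_lintegral_mul _ hq hg, lintegral_withDensity_eq_lintegral_mul _ hq hh]
  refine hμ ha hb hab (hq.mul hf) (hq.mul hg) (hq.mul hh) fun x y => ?_
  simp only [Pi.mul_apply]
  rw [ENNReal.mul_rpow_of_nonneg _ _ ha.le, ENNReal.mul_rpow_of_nonneg _ _ hb.le,
    mul_mul_mul_comm]
  exact mul_le_mul' (hq_conc ha hb hab x y) (hfgh x y)

lemma measure_rpow_mul_le (hμ : IsPrekopaLeindler μ) {a b : ℝ} (ha : 0 < a) (hb : 0 < b)
    (hab : a + b = 1) {A B S : Set E} (hA : MeasurableSet A) (hB : MeasurableSet B)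
    (hS : MeasurableSet S) (hABS : a • A + b • B ⊆ S) : μ A ^ a * μ B ^ b ≤ μ S := by
  have h := hμ ha hb hab (measurable_one.indicator hA) (measurable_one.indicator hB)
    (measurable_one.indicator hS) fun x y => ?_
  · simpa only [lintegral_indicator_one, hA, hB, hS] using h
  by_cases hx : x ∈ A
  · by_cases hy : y ∈ B
    · have hxy : a • x + b • y ∈ S :=
        hABS (Set.add_mem_add (Set.smul_mem_smul_set hx) (Set.smul_mem_smul_set hy))
      simp [hx, hy, hxy]
    · simp [hy, hb]
  · simp [hx, ha]

lemma measureReal_rpow_mul_le [IsFiniteMeasure μ] (hμ : IsPrekopaLeindler μ) {a b : ℝ}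
    (ha : 0 < a) (hb : 0 < b) (hab : a + b = 1) {A B S : Set E} (hA : MeasurableSet A)
    (hB : MeasurableSet B) (hS : MeasurableSet S) (hABS : a • A + b • B ⊆ S) :
    μ.real A ^ a * μ.real B ^ b ≤ μ.real S := by
  simpa only [measureReal_def, ENNReal.toReal_mul, ENNReal.toReal_rpow] using
    ENNReal.toReal_mono (measure_ne_top _ _) (hμ.measure_rpow_mul_le ha hb hab hA hB hS hABS)

end IsPrekopaLeindler

theorem isPrekopaLeindler_volume_pi (n : ℕ) :
    IsPrekopaLeindler (volume : Measure (Fin n → ℝ)) := by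
  induction n with
  | zero =>
    rw [Measure.volume_pi_eq_dirac]
    exact .dirac _
  | succ n ih =>
    have h_map := (volume_preserving_piFinSuccAbove (fun _ : Fin (n + 1) => ℝ) 0).symm
    have h_eq : ⇑(MeasurableEquiv.piFinSuccAbove (fun _ : Fin (n + 1) => ℝ) 0).symm =
        Fin.consLinearEquiv ℝ fun _ : Fin (n + 1) => ℝ := by
      ext x
      simp
    rw [h_eq] at h_map
    rw [← h_map.map_eq]
    exact (isPrekopaLeindler_volume_real.prod ih).map
      (Fin.consLinearEquiv ℝ fun _ : Fin (n + 1) => ℝ).toLinearMap h_map.measurable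


namespace IsLogConcaveFn

variable {d : ℕ} {p : (Fin d → ℝ) → ℝ}

lemma rpow_mul_rpow_le (hp : IsLogConcaveFn p) {a b : ℝ} (ha : 0 ≤ a) (hb : 0 ≤ b)
    (hab : a + b = 1) (x y : Fin d → ℝ) : p x ^ a * p y ^ b ≤ p (a • x + b • y) := by
  obtain rfl : b = 1 - a := by linarith
  exact hp x y a ha (by linarith)

lemma concaveOn_log (hp : IsLogConcaveFn p) :
    ConcaveOn ℝ {x | 0 < p x} fun x => Real.log (p x) := by
  refine ⟨fun x hx y hy a b ha hb hab => ?_, fun x hx y hy a b ha hb hab => ?_⟩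
  · exact (mul_pos (Real.rpow_pos_of_pos hx a) (Real.rpow_pos_of_pos hy b)).trans_le
      (hp.rpow_mul_rpow_le ha hb hab x y)
  · have hxa : 0 < p x ^ a := Real.rpow_pos_of_pos hx a
    have hyb : 0 < p y ^ b := Real.rpow_pos_of_pos hy b
    have h := Real.log_le_log (mul_pos hxa hyb) (hp.rpow_mul_rpow_le ha hb hab x y)
    rwa [Real.log_mul hxa.ne' hyb.ne', Real.log_rpow hx, Real.log_rpow hy] at h

lemma pos_of_mem_interior {x : Fin d → ℝ} (hx : x ∈ interior {x | 0 < p x}) : 0 < p x := by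
  simpa only [Set.mem_ofPred_eq] using interior_subset hx

lemma continuousOn_interior (hp : IsLogConcaveFn p) :
    ContinuousOn p (interior {x | 0 < p x}) :=
  hp.concaveOn_log.continuousOn_interior.rexp.congr fun _ hx =>
    (Real.exp_log (pos_of_mem_interior hx)).symm

lemma measurable_indicator_interior (hp : IsLogConcaveFn p) :
    Measurable ((interior {x | 0 < p x}).indicator fun x => ENNReal.ofReal (p x)) := by
  classical
  rw [← Set.piecewise_eq_indicator]
  exact (ENNReal.continuous_ofReal.comp_continuousOn hp.continuousOn_interior).measurable_piecewise
    continuousOn_const isOpen_interior.measurableSet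

lemma indicator_interior_ae_eq (hp : IsLogConcaveFn p) :
    ((interior {x | 0 < p x}).indicator fun x => ENNReal.ofReal (p x)) =ᵐ[volume]
      fun x => ENNReal.ofReal (p x) := by
  have h_frontier : ∀ᵐ x, x ∉ frontier {x | 0 < p x} :=
    measure_eq_zero_iff_ae_notMem.1 (hp.concaveOn_log.1.addHaar_frontier volume)
  filter_upwards [h_frontier] with x hx
  by_cases hx_int : x ∈ interior {x | 0 < p x}
  · simp [hx_int]
  · have hx_le : p x ≤ 0 := not_lt.1 fun h => hx ⟨subset_closure h, hx_int⟩
    simp [hx_int, hx_le]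

theorem isPrekopaLeindler_withDensity (hp : IsLogConcaveFn p) :
    IsPrekopaLeindler (volume.withDensity fun x => ENNReal.ofReal (p x)) := by
  rw [← withDensity_congr_ae hp.indicator_interior_ae_eq]
  refine (isPrekopaLeindler_volume_pi d).withDensity hp.measurable_indicator_interior
    fun a b ha hb hab x y => ?_
  by_cases hx : x ∈ interior {x | 0 < p x}
  · by_cases hy : y ∈ interior {x | 0 < p x}
    · have hxy := hp.concaveOn_log.1.interior hx hy ha.le hb.le hab
      simp only [Set.indicator_of_mem, hx, hy, hxy]
      rw [ENNReal.ofReal_rpow_of_pos (pos_of_mem_interior hx),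
        ENNReal.ofReal_rpow_of_pos (pos_of_mem_interior hy),
        ← ENNReal.ofReal_mul (Real.rpow_nonneg (pos_of_mem_interior hx).le a)]
      exact ENNReal.ofReal_le_ofReal (hp.rpow_mul_rpow_le ha.le hb.le hab x y)
    · simp [hy, hb]
  · simp [hx, ha]

end IsLogConcaveFn

lemma lintegral_rpow_mul_exp_neg_mul_Ioi {a r : ℝ} (ha : 0 < a) (hr : 0 < r) :
    ∫⁻ s in Set.Ioi (0 : ℝ), ENNReal.ofReal (s ^ (a - 1) * Real.exp (-(r * s))) =
      ENNReal.ofReal ((1 / r) ^ a * Real.Gamma a) := by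
  have h_integral := Real.integral_rpow_mul_exp_neg_mul_Ioi ha hr
  have h_pos : 0 < (1 / r) ^ a * Real.Gamma a :=
    mul_pos (Real.rpow_pos_of_pos (one_div_pos.2 hr) a) (Real.Gamma_pos_of_pos ha)
  rw [← h_integral, ofReal_integral_eq_lintegral_ofReal
    (.of_integral_ne_zero (h_integral ▸ h_pos.ne'))]
  filter_upwards [ae_restrict_mem measurableSet_Ioi] with s hs
  exact mul_nonneg (Real.rpow_nonneg (le_of_lt hs) _) (Real.exp_nonneg _)

lemma le_exp_neg_div_of_rpow_mul_rpow_le_sub {α β θ w : ℝ} (hα : 0 < α) (hα₁ : α ≤ 1)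
    (hβ : 0 ≤ β) (hθ : 0 ≤ θ) (hw : 0 < w) (h : α ^ (1 - w) * β ^ w ≤ α - θ) :
    β ≤ Real.exp (-(θ / w)) := by
  have h_factor : α ^ (1 - w) * β ^ w ≤ α ^ (1 - w) * (α ^ w * (1 - θ)) := by
    rw [← mul_assoc, ← Real.rpow_add hα, sub_add_cancel, Real.rpow_one]
    nlinarith
  have h_rpow : β ^ w ≤ Real.exp (-θ) :=
    calc β ^ w ≤ α ^ w * (1 - θ) := le_of_mul_le_mul_left h_factor (Real.rpow_pos_of_pos hα _)
      _ ≤ α ^ w * Real.exp (-θ) := by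
        gcongr
        linarith [Real.add_one_le_exp (-θ)]
      _ ≤ Real.exp (-θ) :=
        mul_le_of_le_one_left (Real.exp_nonneg _) (Real.rpow_le_one hα.le hα₁ hw.le)
  calc β = (β ^ w) ^ w⁻¹ := (Real.rpow_rpow_inv hβ hw.ne').symm
    _ ≤ Real.exp (-θ) ^ w⁻¹ := by gcongr
    _ = Real.exp (-(θ / w)) := by rw [← Real.exp_mul, neg_mul, ← div_eq_mul_inv]

namespace IsPrekopaLeindler

variable {ν : Measure ℝ} [IsProbabilityMeasure ν]

lemma measureReal_Ioi_le_exp (hν : IsPrekopaLeindler ν) (t : ℝ) {l x : ℝ} (hl : 0 < l)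
    (hx : l < x) :
    ν.real (Set.Ioi (t + x)) ≤
      Real.exp (-(ν.real (Set.Icc (t - l) (t + l)) * x / (2 * l))) := by
  set θ := ν.real (Set.Icc (t - l) (t + l))
  -- The weight for which `(1 - w) * (t - l) + w * (t + x) = t + l`.
  set w := 2 * l / (l + x)
  have hx₀ : 0 < x := hl.trans hx
  have hw₀ : 0 < w := by positivity
  have hw₁ : w < 1 := (div_lt_one (by linarith)).2 (by linarith)
  have hw_mul : w * (l + x) = 2 * l := div_mul_cancel₀ _ (by positivity)
  have h_split : ν.real (Set.Ici (t - l)) - θ = ν.real (Set.Ioi (t + l)) := by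
    rw [← Set.Icc_union_Ioi_eq_Ici (show t - l ≤ t + l by linarith),
      measureReal_union (Set.disjoint_left.2 fun y hy hy' => hy.2.not_gt hy') measurableSet_Ioi,
      add_sub_cancel_left]
  have h_pl : ν.real (Set.Ici (t - l)) ^ (1 - w) * ν.real (Set.Ioi (t + x)) ^ w ≤
      ν.real (Set.Ici (t - l)) - θ := by
    rw [h_split]
    refine hν.measureReal_rpow_mul_le (sub_pos.2 hw₁) hw₀ (sub_add_cancel 1 w) measurableSet_Ici
      measurableSet_Ioi measurableSet_Ioi ?_
    rintro _ ⟨_, ⟨y, hy, rfl⟩, _, ⟨z, hz, rfl⟩, rfl⟩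
    simp only [Set.mem_Ici, Set.mem_Ioi, smul_eq_mul] at hy hz ⊢
    nlinarith [mul_le_mul_of_nonneg_left hy (sub_pos.2 hw₁).le, mul_lt_mul_of_pos_left hz hw₀]
  have h_mono : ν.real (Set.Ioi (t + x)) ≤ ν.real (Set.Ici (t - l)) :=
    measureReal_mono (Set.Ioi_subset_Ici (by linarith))
  rcases (measureReal_nonneg : 0 ≤ ν.real (Set.Ici (t - l))).eq_or_lt with h_zero | h_pos
  · exact (h_mono.trans_eq h_zero.symm).trans (Real.exp_nonneg _)
  · refine (le_exp_neg_div_of_rpow_mul_rpow_le_sub h_pos measureReal_le_one measureReal_nonneg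
      measureReal_nonneg hw₀ h_pl).trans (Real.exp_le_exp.2 (neg_le_neg ?_))
    rw [div_div_eq_mul_div]
    gcongr
    linarith

lemma measureReal_Iio_le_exp (hν : IsPrekopaLeindler ν) (t : ℝ) {l x : ℝ} (hl : 0 < l)
    (hx : l < x) :
    ν.real (Set.Iio (t - x)) ≤
      Real.exp (-(ν.real (Set.Icc (t - l) (t + l)) * x / (2 * l))) := by
  have hν_neg : IsPrekopaLeindler (ν.map Neg.neg) := hν.map (-LinearMap.id) measurable_neg
  have : IsProbabilityMeasure (ν.map Neg.neg) :=
    Measure.isProbabilityMeasure_map measurable_neg.aemeasurable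
  have h := hν_neg.measureReal_Ioi_le_exp (-t) hl hx
  rw [map_measureReal_apply measurable_neg measurableSet_Ioi,
    map_measureReal_apply measurable_neg measurableSet_Icc] at h
  simpa [← sub_eq_add_neg, add_comm] using h

lemma measureReal_lt_abs_sub_le_two_mul_exp (hν : IsPrekopaLeindler ν) (t : ℝ) {l x : ℝ}
    (hl : 0 < l) :
    ν.real {y | x < |y - t|} ≤
      2 * Real.exp (-(ν.real (Set.Icc (t - l) (t + l)) * x / (2 * l))) := by
  set θ := ν.real (Set.Icc (t - l) (t + l))
  rcases le_or_gt x l with hx | hx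
  · have h_exp : -(1 / 2 : ℝ) ≤ -(θ * x / (2 * l)) := by
      rw [neg_le_neg_iff, div_le_div_iff₀ (by positivity) two_pos]
      nlinarith [measureReal_le_one (μ := ν) (s := Set.Icc (t - l) (t + l)),
        measureReal_nonneg (μ := ν) (s := Set.Icc (t - l) (t + l))]
    calc ν.real {y | x < |y - t|} ≤ 1 := measureReal_le_one
      _ ≤ 2 * (-(1 / 2) + 1) := by norm_num
      _ ≤ 2 * Real.exp (-(θ * x / (2 * l))) := by
        gcongr
        exact (Real.add_one_le_exp _).trans (Real.exp_le_exp.2 h_exp)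
  calc ν.real {y | x < |y - t|} ≤ ν.real (Set.Ioi (t + x) ∪ Set.Iio (t - x)) := by
        refine measureReal_mono fun y (hy : x < |y - t|) => ?_
        rcases lt_abs.1 hy with h | h
        · exact .inl (by simp only [Set.mem_Ioi]; linarith)
        · exact .inr (by simp only [Set.mem_Iio]; linarith)
    _ ≤ ν.real (Set.Ioi (t + x)) + ν.real (Set.Iio (t - x)) := measureReal_union_le _ _
    _ ≤ Real.exp (-(θ * x / (2 * l))) + Real.exp (-(θ * x / (2 * l))) :=
      add_le_add (hν.measureReal_Ioi_le_exp t hl hx) (hν.measureReal_Iio_le_exp t hl hx)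
    _ = 2 * Real.exp (-(θ * x / (2 * l))) := (two_mul _).symm

lemma lintegral_sub_sq_le (hν : IsPrekopaLeindler ν) (t : ℝ) {l : ℝ} (hl : 0 < l)
    (hθ : 0 < ν.real (Set.Icc (t - l) (t + l))) :
    ∫⁻ y, ENNReal.ofReal ((y - t) ^ 2) ∂ν ≤
      ENNReal.ofReal ((4 * l / ν.real (Set.Icc (t - l) (t + l))) ^ 2) := by
  set θ := ν.real (Set.Icc (t - l) (t + l))
  set r := θ / (2 * l)
  have hr : 0 < r := by positivity
  have h_tail (s : ℝ) : ν {y | s < |y - t|} ≤ ENNReal.ofReal (2 * Real.exp (-(r * s))) := by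
    rw [← ofReal_measureReal]
    refine ENNReal.ofReal_le_ofReal
      ((hν.measureReal_lt_abs_sub_le_two_mul_exp t hl).trans_eq ?_)
    simp only [r, θ]
    ring_nf
  have h_layer := lintegral_rpow_eq_lintegral_meas_lt_mul ν
    (f := fun y => |y - t|) (ae_of_all _ fun y => abs_nonneg _) (by fun_prop) two_pos
  calc ∫⁻ y, ENNReal.ofReal ((y - t) ^ 2) ∂ν
      = ENNReal.ofReal 2 * ∫⁻ s in Set.Ioi 0, ν {y | s < |y - t|} *
          ENNReal.ofReal (s ^ (2 - 1 : ℝ)) := by simpa using h_layer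
    _ ≤ ENNReal.ofReal 2 * ∫⁻ s in Set.Ioi 0,
          ENNReal.ofReal 2 * ENNReal.ofReal (s ^ (2 - 1 : ℝ) * Real.exp (-(r * s))) := by
        gcongr _ * ?_
        refine setLIntegral_mono' measurableSet_Ioi fun s _ => ?_
        rw [mul_comm (s ^ _), ENNReal.ofReal_mul (Real.exp_nonneg _), ← mul_assoc,
          ← ENNReal.ofReal_mul two_pos.le]
        gcongr
        exact h_tail s
    _ = ENNReal.ofReal ((4 * l / θ) ^ 2) := by
        rw [lintegral_const_mul' _ _ ENNReal.ofReal_ne_top,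
          lintegral_rpow_mul_exp_neg_mul_Ioi two_pos hr, Real.Gamma_two,
          ← ENNReal.ofReal_mul two_pos.le, ← ENNReal.ofReal_mul two_pos.le]
        congr 1
        simp only [r, one_div, inv_div, Real.rpow_two]
        ring

lemma measureReal_sq_mul_integral_sub_sq_le (hν : IsPrekopaLeindler ν) (t : ℝ) {l : ℝ}
    (hl : 0 < l) :
    ν.real (Set.Icc (t - l) (t + l)) ^ 2 * ∫ y, (y - t) ^ 2 ∂ν ≤ 16 * l ^ 2 := by
  rcases (measureReal_nonneg : 0 ≤ ν.real (Set.Icc (t - l) (t + l))).eq_or_lt with hθ | hθ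
  · rw [← hθ, zero_pow two_ne_zero, zero_mul]
    positivity
  · have h_int : ∫ y, (y - t) ^ 2 ∂ν ≤ (4 * l / ν.real (Set.Icc (t - l) (t + l))) ^ 2 := by
      rw [integral_eq_lintegral_of_nonneg_ae (ae_of_all _ fun y => sq_nonneg _) (by fun_prop)]
      exact ENNReal.toReal_le_of_le_ofReal (sq_nonneg _) (hν.lintegral_sub_sq_le t hl hθ)
    rw [div_pow, le_div_iff₀ (by positivity)] at h_int
    linarith

end IsPrekopaLeindler

section RandomVariable

variable {Ω : Type*} [MeasurableSpace Ω] {μ : Measure Ω} {Y : Ω → ℝ}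

lemma memLp_two_of_variance_pos [IsFiniteMeasure μ] (hY : AEMeasurable Y μ) (h : 0 < Var[Y; μ]) :
    MemLp Y 2 μ := by
  rw [← evariance_lt_top_iff_memLp hY.aestronglyMeasurable]
  exact (ENNReal.toReal_pos_iff.1 h).2

lemma measure_abs_sub_le_of_isPrekopaLeindler_map [IsProbabilityMeasure μ]
    (hY : AEMeasurable Y μ) (hY_law : IsPrekopaLeindler (μ.map Y)) {v ε : ℝ} (hv : 0 < v)
    (h_var : v ≤ Var[Y; μ]) (hε : 0 < ε) (t : ℝ) :
    μ {ω | |Y ω - t| ≤ ε * √v / 4} ≤ ENNReal.ofReal ε := by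
  have := Measure.isProbabilityMeasure_map hY
  set l := ε * √v / 4
  set θ := (μ.map Y).real (Set.Icc (t - l) (t + l))
  have h_preimage : {ω | |Y ω - t| ≤ l} = Y ⁻¹' Set.Icc (t - l) (t + l) := by
    ext ω
    simp only [Set.mem_ofPred_eq, Set.mem_preimage, ← Set.mem_Icc_iff_abs_le, abs_sub_comm]
  have h_var_le : Var[Y; μ] ≤ ∫ y, (y - t) ^ 2 ∂μ.map Y := by
    rw [integral_map hY (by fun_prop), ← variance_sub_const hY.aestronglyMeasurable t]
    exact variance_le_expectation_sq (hY.sub_const t).aestronglyMeasurable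
  have h_sq : θ ^ 2 * v ≤ ε ^ 2 * v :=
    calc θ ^ 2 * v ≤ θ ^ 2 * ∫ y, (y - t) ^ 2 ∂μ.map Y := by
          gcongr
          exact h_var.trans h_var_le
      _ ≤ 16 * l ^ 2 := hY_law.measureReal_sq_mul_integral_sub_sq_le t (by positivity)
      _ = ε ^ 2 * v := by
          simp only [l, div_pow, mul_pow, Real.sq_sqrt hv.le]
          ring
  have h_real : θ ≤ ε := (sq_le_sq₀ measureReal_nonneg hε.le).1 (le_of_mul_le_mul_right h_sq hv)
  rw [h_preimage, ← Measure.map_apply_of_aemeasurable hY measurableSet_Icc, ← ofReal_measureReal]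
  exact ENNReal.ofReal_le_ofReal h_real

lemma measure_add_sqrt_le_abs_le [IsFiniteMeasure μ] (hY : MemLp Y 2 μ) {M V ε : ℝ}
    (h_mean : |μ[Y]| ≤ M) (hV : 0 < V) (h_var : Var[Y; μ] ≤ V) (hε : 0 < ε) :
    μ {ω | M + √(V / ε) ≤ |Y ω|} ≤ ENNReal.ofReal ε := by
  calc μ {ω | M + √(V / ε) ≤ |Y ω|} ≤ μ {ω | √(V / ε) ≤ |Y ω - μ[Y]|} := by
        refine measure_mono fun ω hω => ?_
        rw [Set.mem_ofPred_eq] at hω ⊢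
        linarith [abs_sub_abs_le_abs_sub (Y ω) (μ[Y])]
    _ ≤ ENNReal.ofReal (Var[Y; μ] / √(V / ε) ^ 2) :=
        meas_ge_le_variance_div_sq hY (by positivity)
    _ ≤ ENNReal.ofReal ε := by
        refine ENNReal.ofReal_le_ofReal ?_
        rw [Real.sq_sqrt (by positivity), div_le_iff₀ (by positivity), mul_div_cancel₀ _ hε.ne']
        exact h_var

end RandomVariable

section AffineSmallBall

variable {E Ω : Type*} [NormedAddCommGroup E] [InnerProductSpace ℝ E] [MeasurableSpace Ω]
  {μ : Measure Ω} {X : Ω → E}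

/-- The small-ball property of a random vector `X` with an intercept: every unit vector `(c, v)` of
`ℝ × E` satisfies `|c + ⟪v, X⟫| ≤ ℓ` with probability at most `ε`. Taking `c = 0` gives the property
without an intercept. -/
def AffineSmallBall (μ : Measure Ω) (X : Ω → E) (ℓ : ℝ) (ε : ℝ≥0∞) : Prop :=
  ∀ (c : ℝ) (v : E), c ^ 2 + ‖v‖ ^ 2 = 1 → μ {ω | |c + ⟪v, X ω⟫| ≤ ℓ} ≤ ε

theorem affineSmallBall_of_forall_norm_eq_one {r K : ℝ} {ε : ℝ≥0∞} (hK : 1 ≤ K)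
    (h_ball : ∀ a : E, ‖a‖ = 1 → ∀ t, μ {ω | |⟪a, X ω⟫ - t| ≤ r} ≤ ε)
    (h_tail : ∀ a : E, ‖a‖ = 1 → μ {ω | K ≤ |⟪a, X ω⟫|} ≤ ε) :
    AffineSmallBall μ X (min (1 / 4) (r / (2 * K))) ε := by
  intro c v hcv
  rcases eq_or_ne v 0 with rfl | hv
  · have hc : 1 ≤ |c| := by simpa using hcv.ge
    have h_empty : {ω | |c + ⟪0, X ω⟫| ≤ min (1 / 4) (r / (2 * K))} = ∅ := by
      refine Set.eq_empty_of_forall_notMem fun ω hω => ?_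
      rw [Set.mem_ofPred_eq, inner_zero_left, add_zero, le_min_iff] at hω
      linarith [hω.1]
    rw [h_empty, measure_empty]
    exact zero_le
  set a := ‖v‖⁻¹ • v
  have hv_pos : 0 < ‖v‖ := norm_pos_iff.2 hv
  have ha : ‖a‖ = 1 := norm_smul_inv_norm hv
  have h_inner (x : E) : ⟪v, x⟫ = ‖v‖ * ⟪a, x⟫ := by
    rw [real_inner_smul_left, mul_inv_cancel_left₀ hv_pos.ne']
  simp only [h_inner]
  rcases le_or_gt (‖v‖ * (2 * K)) 1 with hvK | hvK
  · refine (measure_mono fun ω hω => ?_).trans (h_tail a ha)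
    rw [Set.mem_ofPred_eq, le_min_iff] at hω
    have hc : 3 / 4 ≤ |c| := by nlinarith [sq_abs c, abs_nonneg c]
    have h_abs : |c| - ‖v‖ * |⟪a, X ω⟫| ≤ |c + ‖v‖ * ⟪a, X ω⟫| := by
      simpa [abs_mul] using abs_sub_abs_le_abs_add c (‖v‖ * ⟪a, X ω⟫)
    have h_large : ‖v‖ * K ≤ ‖v‖ * |⟪a, X ω⟫| := by linarith [hω.1]
    exact le_of_mul_le_mul_left h_large hv_pos
  · refine (measure_mono fun ω hω => ?_).trans (h_ball a ha (-c / ‖v‖))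
    rw [Set.mem_ofPred_eq, le_min_iff, le_div_iff₀ (b := r) (by positivity)] at hω
    rw [Set.mem_ofPred_eq]
    have h_factor : |c + ‖v‖ * ⟪a, X ω⟫| = ‖v‖ * |⟪a, X ω⟫ - -c / ‖v‖| := by
      rw [← abs_of_pos hv_pos, ← abs_mul, abs_of_pos hv_pos]
      congr 1
      field_simp
      ring
    calc |⟪a, X ω⟫ - -c / ‖v‖| ≤ |⟪a, X ω⟫ - -c / ‖v‖| * (‖v‖ * (2 * K)) :=
          le_mul_of_one_le_right (abs_nonneg _) hvK.le
      _ = |c + ‖v‖ * ⟪a, X ω⟫| * (2 * K) := by rw [h_factor]; ring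
      _ ≤ r := hω.2

section FiniteDimensional

variable [FiniteDimensional ℝ E] [MeasurableSpace E] [BorelSpace E]

lemma volume_slab_inter_closedBall_le {a : E} (ha : ‖a‖ = 1) (t : ℝ) {r R : ℝ} (hR : 0 ≤ R) :
    volume {x : E | |⟪a, x⟫ - t| ≤ r ∧ ‖x‖ ≤ R} ≤
      ENNReal.ofReal (2 * r * (2 * R) ^ (Module.finrank ℝ E - 1)) := by
  have : Nontrivial E := ⟨a, 0, by rintro rfl; simp at ha⟩
  let i₀ : Fin (Module.finrank ℝ E) := ⟨0, Module.finrank_pos⟩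
  obtain ⟨b, hb⟩ := Orthonormal.exists_orthonormalBasis_extension_of_card_eq
    (v := fun _ : Fin (Module.finrank ℝ E) => a) (s := {i₀}) (Fintype.card_fin _).symm
    ⟨fun _ => ha, fun i j hij => (hij (Subsingleton.elim i j)).elim⟩
  let box : Fin (Module.finrank ℝ E) → Set ℝ :=
    Function.update (fun _ => Set.Icc (-R) R) i₀ (Set.Icc (t - r) (t + r))
  have h_coord : MeasurePreserving fun x : E => WithLp.ofLp (b.repr x) :=
    (PiLp.volume_preserving_ofLp _).comp b.measurePreserving_repr
  have h_subset : {x : E | |⟪a, x⟫ - t| ≤ r ∧ ‖x‖ ≤ R} ⊆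
      (fun x : E => WithLp.ofLp (b.repr x)) ⁻¹' Set.univ.pi box := by
    rintro x ⟨h_slab, h_ball⟩ i -
    rcases eq_or_ne i i₀ with rfl | hi
    · have h_mem : b.repr x i₀ ∈ Set.Icc (t - r) (t + r) := by
        rwa [b.repr_apply_apply, hb i₀ rfl, ← Set.mem_Icc_iff_abs_le, abs_sub_comm]
      simpa [box] using h_mem
    · have h_le : |b.repr x i| ≤ R := by
        simpa using ((PiLp.norm_apply_le (b.repr x) i).trans_eq (b.repr.norm_map x)).trans h_ball
      simpa [box, hi, ← abs_le] using h_le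
  calc volume {x : E | |⟪a, x⟫ - t| ≤ r ∧ ‖x‖ ≤ R} ≤ volume (Set.univ.pi box) :=
        (measure_mono h_subset).trans (h_coord.measure_preimage_le _)
    _ = ENNReal.ofReal (2 * r * (2 * R) ^ (Module.finrank ℝ E - 1)) := by
        have h_volume (i) : volume (box i) =
            Function.update (fun _ => ENNReal.ofReal (2 * R)) i₀ (ENNReal.ofReal (2 * r)) i := by
          simp only [box, Function.update_apply]
          split_ifs <;> rw [Real.volume_Icc] <;> ring_nf
        rw [volume_pi_pi, Finset.prod_congr rfl fun i _ => h_volume i,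
          Finset.prod_update_of_mem (Finset.mem_univ _), Finset.prod_const,
          ← ENNReal.ofReal_pow (by positivity), ← ENNReal.ofReal_mul' (by positivity),
          Finset.card_univ_sdiff, Fintype.card_fin, Finset.card_singleton]

theorem affineSmallBall_of_map_le {C : ℝ≥0∞} {r R : ℝ} (hX : AEMeasurable X μ)
    (hX_law : μ.map X ≤ C • volume) (hR : 0 ≤ R) (hXR : ∀ᵐ ω ∂μ, ‖X ω‖ ≤ R) :
    AffineSmallBall μ X (min (1 / 4) (r / (2 * (R + 1))))
      (C * ENNReal.ofReal (2 * r * (2 * R) ^ (Module.finrank ℝ E - 1))) := by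
  refine affineSmallBall_of_forall_norm_eq_one (by linarith) (fun a ha t => ?_) fun a ha => ?_
  · calc μ {ω | |⟪a, X ω⟫ - t| ≤ r}
        ≤ μ (X ⁻¹' {x | |⟪a, x⟫ - t| ≤ r ∧ ‖x‖ ≤ R}) := by
          refine measure_mono_ae ?_
          filter_upwards [hXR] with ω hωR hω
          exact ⟨hω, hωR⟩
      _ ≤ μ.map X {x | |⟪a, x⟫ - t| ≤ r ∧ ‖x‖ ≤ R} := Measure.le_map_apply hX _
      _ ≤ (C • volume) {x | |⟪a, x⟫ - t| ≤ r ∧ ‖x‖ ≤ R} := hX_law _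
      _ ≤ C * ENNReal.ofReal (2 * r * (2 * R) ^ (Module.finrank ℝ E - 1)) := by
          rw [Measure.smul_apply, smul_eq_mul]
          gcongr
          exact volume_slab_inter_closedBall_le ha t hR
  · have h_null : μ {ω | R + 1 ≤ |⟪a, X ω⟫|} = 0 := by
      refine measure_eq_zero_iff_ae_notMem.2 ?_
      filter_upwards [hXR] with ω hωR hω
      have := abs_real_inner_le_norm a (X ω)
      rw [ha, one_mul] at this
      linarith
    exact h_null.le.trans zero_le

theorem affineSmallBall_of_isPrekopaLeindler_map [IsProbabilityMeasure μ] {M v V ε : ℝ}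
    (hX : MemLp X 2 μ) (hX_law : IsPrekopaLeindler (μ.map X)) (hM : ‖μ[X]‖ ≤ M) (hv : 0 < v)
    (h_var : ∀ a : E, ‖a‖ = 1 → Var[fun ω => ⟪a, X ω⟫; μ] ∈ Set.Icc v V) (hε : 0 < ε) :
    AffineSmallBall μ X (min (1 / 4) (ε * √v / 4 / (2 * (1 + (M + √(V / ε))))))
      (ENNReal.ofReal ε) := by
  have h_aemeas (a : E) : AEMeasurable (fun ω => ⟪a, X ω⟫) μ :=
    hX.aestronglyMeasurable.aemeasurable.const_inner
  have h_law (a : E) : IsPrekopaLeindler (μ.map fun ω => ⟪a, X ω⟫) := by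
    have h_map : μ.map (fun ω => ⟪a, X ω⟫) = (μ.map X).map (innerₗ E a) :=
      (AEMeasurable.map_map_of_aemeasurable (by fun_prop) hX.aestronglyMeasurable.aemeasurable).symm
    rw [h_map]
    exact hX_law.map _ (by fun_prop)
  have hM₀ : 0 ≤ M := (norm_nonneg _).trans hM
  refine affineSmallBall_of_forall_norm_eq_one (le_add_of_nonneg_right (by positivity))
    (fun a ha t => ?_) fun a ha => ?_
  · exact measure_abs_sub_le_of_isPrekopaLeindler_map (h_aemeas a) (h_law a) hv (h_var a ha).1 hε t
  · have h_mean : |μ[fun ω => ⟪a, X ω⟫]| ≤ M := by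
      rw [integral_inner (hX.integrable one_le_two) a]
      exact (abs_real_inner_le_norm a _).trans (by rwa [ha, one_mul])
    refine (measure_mono fun ω hω => ?_).trans (measure_add_sqrt_le_abs_le (hX.const_inner a) h_mean
      (hv.trans_le ((h_var a ha).1.trans (h_var a ha).2)) (h_var a ha).2 hε)
    rw [Set.mem_ofPred_eq] at hω ⊢
    linarith

end FiniteDimensional

end AffineSmallBall

section Coordinates

variable {Ω : Type*} [MeasurableSpace Ω] {μ : Measure Ω} {d : ℕ}

lemma eNorm_eq_norm_toLp (x : Fin d → ℝ) : eNorm x = ‖WithLp.toLp 2 x‖ := by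
  simp [eNorm, EuclideanSpace.norm_eq]

lemma eNorm_sq (x : Fin d → ℝ) : eNorm x ^ 2 = ∑ i, x i ^ 2 :=
  Real.sq_sqrt (Finset.sum_nonneg fun i _ => sq_nonneg (x i))

lemma eNorm_sq_eq_sq_add_eNorm_tail_sq (u : Fin (d + 1) → ℝ) :
    eNorm u ^ 2 = u 0 ^ 2 + eNorm (Fin.tail u) ^ 2 := by
  rw [eNorm_sq, eNorm_sq, Fin.sum_univ_succ]
  rfl

lemma eNorm_le_eNorm_cons (c : ℝ) (x : Fin d → ℝ) :
    eNorm x ≤ eNorm (Fin.cons c x : Fin (d + 1) → ℝ) := by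
  refine le_of_sq_le_sq ?_ (Real.sqrt_nonneg _)
  rw [eNorm_sq_eq_sq_add_eNorm_tail_sq (Fin.cons c x : Fin (d + 1) → ℝ), Fin.tail_cons]
  exact le_add_of_nonneg_left (sq_nonneg _)

lemma inner_toLp_eq_dotProduct (u x : Fin d → ℝ) :
    ⟪WithLp.toLp 2 u, WithLp.toLp 2 x⟫ = u ⬝ᵥ x := by
  rw [EuclideanSpace.inner_toLp_toLp, star_trivial, dotProduct_comm]

namespace AffineSmallBall

variable {X : Ω → Fin d → ℝ} {ℓ : ℝ} {ε : ℝ≥0∞}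

lemma measure_abs_dotProduct_le (h : AffineSmallBall μ (fun ω => WithLp.toLp 2 (X ω)) ℓ ε)
    {u : Fin d → ℝ} (hu : eNorm u = 1) : μ {ω | |u ⬝ᵥ X ω| ≤ ℓ} ≤ ε := by
  simpa only [inner_toLp_eq_dotProduct, zero_add] using
    h 0 (WithLp.toLp 2 u) (by simp [← eNorm_eq_norm_toLp, hu])

lemma measure_abs_dotProduct_cons_one_le
    (h : AffineSmallBall μ (fun ω => WithLp.toLp 2 (X ω)) ℓ ε) {u : Fin (d + 1) → ℝ}
    (hu : eNorm u = 1) : μ {ω | |u ⬝ᵥ Fin.cons (1 : ℝ) (X ω)| ≤ ℓ} ≤ ε := by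
  have h_dot (x : Fin d → ℝ) : u ⬝ᵥ Fin.cons (1 : ℝ) x = u 0 + Fin.tail u ⬝ᵥ x := by
    simp [dotProduct, Fin.sum_univ_succ, Fin.tail]
  simp only [h_dot, ← inner_toLp_eq_dotProduct]
  refine h (u 0) (WithLp.toLp 2 (Fin.tail u)) ?_
  rw [← eNorm_eq_norm_toLp, ← eNorm_sq_eq_sq_add_eNorm_tail_sq, hu, one_pow]

end AffineSmallBall

variable {X : Ω → Fin d → ℝ} {p : (Fin d → ℝ) → ℝ}

theorem affineSmallBall_of_density_le {C R ε : ℝ} (hC : 0 < C) (hR : 0 < R)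
    (hX : Measurable X) (hp : ∀ x, p x ≤ C)
    (hX_law : μ.map X = volume.withDensity fun x => ENNReal.ofReal (p x))
    (hXR : ∀ᵐ ω ∂μ, eNorm (X ω) ≤ R) :
    AffineSmallBall μ (fun ω => WithLp.toLp 2 (X ω))
      (min (1 / 4) (ε / (2 * C * (2 * R) ^ (d - 1)) / (2 * (R + 1)))) (ENNReal.ofReal ε) := by
  have h_law : μ.map (fun ω => WithLp.toLp 2 (X ω)) ≤ ENNReal.ofReal C • volume :=
    calc μ.map (fun ω => WithLp.toLp 2 (X ω)) = (μ.map X).map (WithLp.toLp 2) :=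
          (Measure.map_map (WithLp.measurable_toLp 2 _) hX).symm
      _ ≤ (ENNReal.ofReal C • volume).map (WithLp.toLp 2) := by
          refine Measure.map_mono ?_ (WithLp.measurable_toLp 2 _)
          rw [hX_law, ← withDensity_const]
          exact withDensity_mono (ae_of_all _ fun x => ENNReal.ofReal_le_ofReal (hp x))
      _ = ENNReal.ofReal C • volume := by
          rw [Measure.map_smul, (PiLp.volume_preserving_toLp _).map_eq]
  have h_ball := affineSmallBall_of_map_le (r := ε / (2 * C * (2 * R) ^ (d - 1)))
    ((WithLp.measurable_toLp 2 _).comp hX).aemeasurable h_law hR.le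
    (by simpa only [eNorm_eq_norm_toLp, Function.comp_apply] using hXR)
  have h_const : C * (2 * (ε / (2 * C * (2 * R) ^ (d - 1))) * (2 * R) ^ (d - 1)) = ε := by
    field_simp
  rwa [finrank_euclideanSpace_fin, ← ENNReal.ofReal_mul hC.le, h_const] at h_ball

lemma memLp_two_of_forall_variance_pos [IsFiniteMeasure μ] {ι : Type*} [Fintype ι]
    {X : Ω → ι → ℝ} (hX : Measurable X) (h_var : ∀ i, 0 < Var[fun ω => X ω i; μ]) :
    MemLp (fun ω => WithLp.toLp 2 (X ω)) 2 μ :=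
  memLp_piLp_iff.2 fun i => memLp_two_of_variance_pos (by fun_prop) (h_var i)

lemma integral_toLp {ι : Type*} [Fintype ι] {X : Ω → ι → ℝ}
    (hX : Integrable (fun ω => WithLp.toLp 2 (X ω)) μ) :
    ∫ ω, WithLp.toLp 2 (X ω) ∂μ = WithLp.toLp 2 fun i => ∫ ω, X ω i ∂μ := by
  ext i
  exact eval_integral_piLp (integrable_piLp_iff.1 hX) i

theorem affineSmallBall_of_isLogConcaveFn [IsProbabilityMeasure μ] {M v V ε : ℝ} (hv : 0 < v)
    (hε : 0 < ε) (hX : Measurable X) (hp : IsLogConcaveFn p)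
    (hX_law : μ.map X = volume.withDensity fun x => ENNReal.ofReal (p x))
    (h_mean : eNorm (fun i => ∫ ω, X ω i ∂μ) ≤ M)
    (h_cov : ∀ a : Fin d → ℝ, eNorm a = 1 →
      v ≤ ∫ ω, (a ⬝ᵥ X ω - a ⬝ᵥ (fun i => ∫ ω', X ω' i ∂μ)) ^ 2 ∂μ ∧
        ∫ ω, (a ⬝ᵥ X ω - a ⬝ᵥ (fun i => ∫ ω', X ω' i ∂μ)) ^ 2 ∂μ ≤ V) :
    AffineSmallBall μ (fun ω => WithLp.toLp 2 (X ω))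
      (min (1 / 4) (ε * √v / 4 / (2 * (1 + (M + √(V / ε)))))) (ENNReal.ofReal ε) := by
  have h_memLp : MemLp (fun ω => WithLp.toLp 2 (X ω)) 2 μ := by
    refine memLp_two_of_forall_variance_pos hX fun i => hv.trans_le ?_
    rw [variance_eq_integral (by fun_prop)]
    simpa [eNorm_eq_norm_toLp] using (h_cov (Pi.single i 1) (by simp [eNorm_eq_norm_toLp])).1
  have h_integrable := h_memLp.integrable one_le_two
  have h_law : IsPrekopaLeindler (μ.map fun ω => WithLp.toLp 2 (X ω)) := by
    have h_map : μ.map (fun ω => WithLp.toLp 2 (X ω)) = (μ.map X).map (WithLp.toLp 2) :=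
      (Measure.map_map (WithLp.measurable_toLp 2 _) hX).symm
    rw [h_map, hX_law]
    exact hp.isPrekopaLeindler_withDensity.map (WithLp.linearEquiv 2 ℝ (Fin d → ℝ)).symm.toLinearMap
      (WithLp.measurable_toLp 2 _)
  refine affineSmallBall_of_isPrekopaLeindler_map h_memLp h_law ?_ hv (fun a ha => ?_) hε
  · rwa [integral_toLp h_integrable, ← eNorm_eq_norm_toLp]
  · have h_var : Var[fun ω => ⟪a, WithLp.toLp 2 (X ω)⟫; μ] =
        ∫ ω, (WithLp.ofLp a ⬝ᵥ X ω - WithLp.ofLp a ⬝ᵥ (fun i => ∫ ω', X ω' i ∂μ)) ^ 2 ∂μ := by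
      rw [variance_eq_integral (by fun_prop), integral_inner h_integrable,
        integral_toLp h_integrable]
      simp only [← inner_toLp_eq_dotProduct, WithLp.toLp_ofLp]
    rw [h_var]
    exact h_cov _ (by rwa [eNorm_eq_norm_toLp])

end Coordinates

/-- (i) If `X̃` has a Lebesgue density bounded by `C`, and `‖X‖ ≤ √d m_X` a.s.
(where either `X = X̃` or `X = (1, X̃')'` with an intercept), then there is `ℓ₁ ∈ (0,1)`,
depending only on `C, m_X` and the dimension, with `P(|u'X| ≤ ℓ₁) ≤ 1/4` for all unit `u`.
(ii) If the density of `X̃` is log-concave with `‖E[X̃]‖ ≤ C` and covariance spectrum in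
`[C⁻¹, C]`, the same holds with `ℓ₁` depending only on `C`. -/
theorem stmt_6 (C mX : ℝ) (hC : 0 < C) (hmX : 0 < mX) :
    -- Part (i): bounded density, fixed dimension.
    (∀ dt : ℕ, 1 ≤ dt →
      ∃ ℓ1 : ℝ, 0 < ℓ1 ∧ ℓ1 < 1 ∧
        ∀ (Ω : Type) (_ : MeasurableSpace Ω) (μ : Measure Ω), IsProbabilityMeasure μ →
        ∀ (Xt : Ω → Fin dt → ℝ), Measurable Xt →
        ∀ p : (Fin dt → ℝ) → ℝ, (∀ x, 0 ≤ p x) → (∀ x, p x ≤ C) →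
          μ.map Xt = MeasureTheory.volume.withDensity (fun x => ENNReal.ofReal (p x)) →
          -- case without an intercept: `X = X̃`, `d = d̃`
          ((∀ᵐ ω ∂μ, eNorm (Xt ω) ≤ Real.sqrt dt * mX) →
            ∀ u : Fin dt → ℝ, eNorm u = 1 →
              μ {ω | |u ⬝ᵥ Xt ω| ≤ ℓ1} ≤ 1/4) ∧
          -- case with an intercept: `X = (1, X̃')'`, `d = d̃ + 1`
          ((∀ᵐ ω ∂μ, eNorm (Fin.cons (1 : ℝ) (Xt ω)) ≤ Real.sqrt (dt + 1) * mX) →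
            ∀ u : Fin (dt + 1) → ℝ, eNorm u = 1 →
              μ {ω | |u ⬝ᵥ Fin.cons (1 : ℝ) (Xt ω)| ≤ ℓ1} ≤ 1/4)) ∧
    -- Part (ii): log-concave density, dimension-free constant.
    (∃ ℓ1 : ℝ, 0 < ℓ1 ∧ ℓ1 < 1 ∧
      ∀ dt : ℕ, 1 ≤ dt →
      ∀ (Ω : Type) (_ : MeasurableSpace Ω) (μ : Measure Ω), IsProbabilityMeasure μ →
      ∀ (Xt : Ω → Fin dt → ℝ), Measurable Xt →
      ∀ p : (Fin dt → ℝ) → ℝ, (∀ x, 0 ≤ p x) → IsLogConcaveFn p →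
        μ.map Xt = MeasureTheory.volume.withDensity (fun x => ENNReal.ofReal (p x)) →
        eNorm (fun i => ∫ ω, Xt ω i ∂μ) ≤ C →
        (∀ a : Fin dt → ℝ, eNorm a = 1 →
          C⁻¹ ≤ ∫ ω, (a ⬝ᵥ Xt ω - a ⬝ᵥ (fun i => ∫ ω', Xt ω' i ∂μ)) ^ 2 ∂μ ∧
            ∫ ω, (a ⬝ᵥ Xt ω - a ⬝ᵥ (fun i => ∫ ω', Xt ω' i ∂μ)) ^ 2 ∂μ ≤ C) →
        ((∀ u : Fin dt → ℝ, eNorm u = 1 →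
            μ {ω | |u ⬝ᵥ Xt ω| ≤ ℓ1} ≤ 1/4) ∧
          (∀ u : Fin (dt + 1) → ℝ, eNorm u = 1 →
            μ {ω | |u ⬝ᵥ Fin.cons (1 : ℝ) (Xt ω)| ≤ ℓ1} ≤ 1/4))) := by
  have h_quarter : ENNReal.ofReal (1 / 4) = 1 / 4 := by
    rw [ENNReal.ofReal_div_of_pos four_pos, ENNReal.ofReal_one, ENNReal.ofReal_ofNat]
  have min_lt_one (r : ℝ) : min (1 / 4) r < 1 := (min_le_left _ _).trans_lt (by norm_num)
  rw [← h_quarter]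
  refine ⟨fun dt _ => ?_,
    min (1 / 4) (1 / 4 * √C⁻¹ / 4 / (2 * (1 + (C + √(C / (1 / 4)))))), by positivity,
    min_lt_one _, fun dt _ Ω _ μ _ X hX p _ hp hX_law h_mean h_cov => ?_⟩
  · have hR : 0 < √(dt + 1) * mX := by positivity
    refine ⟨min (1 / 4) (1 / 4 / (2 * C * (2 * (√(dt + 1) * mX)) ^ (dt - 1)) /
      (2 * (√(dt + 1) * mX + 1))), by positivity, min_lt_one _,
      fun Ω _ μ _ X hX p _ hpC hX_law => ⟨fun hXR u hu => ?_, fun hXR u hu => ?_⟩⟩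
    · have hXR' : ∀ᵐ ω ∂μ, eNorm (X ω) ≤ √(dt + 1) * mX :=
        hXR.mono fun ω hω => hω.trans (by gcongr; linarith)
      exact (affineSmallBall_of_density_le hC hR hX hpC hX_law hXR').measure_abs_dotProduct_le hu
    · have hXR' : ∀ᵐ ω ∂μ, eNorm (X ω) ≤ √(dt + 1) * mX :=
        hXR.mono fun ω hω => (eNorm_le_eNorm_cons 1 (X ω)).trans hω
      exact (affineSmallBall_of_density_le hC hR hX hpC hX_law
        hXR').measure_abs_dotProduct_cons_one_le hu
  · have h_ball := affineSmallBall_of_isLogConcaveFn (inv_pos.2 hC)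
      (show (0 : ℝ) < 1 / 4 by norm_num) hX hp hX_law h_mean h_cov
    exact ⟨fun u hu => h_ball.measure_abs_dotProduct_le hu,
      fun u hu => h_ball.measure_abs_dotProduct_cons_one_le hu⟩
end
end

section
/- Fix λ > 0 and integers n, d_1, d_2 ≥ 1. Let a ∈ ℝ^{d_1}, and let z_1, ..., z_n be vectors in ℝ^{d_2}. Define z̃_i = (a', z_i')' ∈ ℝ^{d_1+d_2} and z̄_i = (1, z_i')' ∈ ℝ^{1+d_2} for each i ∈ [n]. Then for any v ∈ ℝ^{d_2}, setting ṽ = (a', v')' and v̄ = (1, v')': ṽ'(λ·I_{d_1+d_2} + Σ_{i=1}^n z̃_i z̃_i')^{-1} ṽ ≤ max(1, ‖a‖²) · v̄'(λ·I_{1+d_2} + Σ_{i=1}^n z̄_i z̄_i')^{-1} v̄. -/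
open Matrix

/-!
For positive definite `A` and `B`, `Eᴴ A⁻¹ E ≤ B⁻¹` if and only if `E B Eᴴ ≤ A` in the Loewner
order: both say that the block matrix `[A, E; Eᴴ, B⁻¹]` is positive semidefinite. Let `E` be the
matrix of `(t, w) ↦ (t • a, w)`, so that `z̃ᵢ = E z̄ᵢ` and `ṽ = E v̄`. With `S = ∑ᵢ z̄ᵢ z̄ᵢ'` and
`c = max(1, ‖a‖²)`, the claim follows from `E (λ + S) Eᴴ ≤ c (λ + E S Eᴴ)`, hence, as `c ≥ 1`, from
`E Eᴴ ≤ c`. The same equivalence turns this into `Eᴴ E ≤ c`, where `Eᴴ E` is diagonal with entries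
`‖a‖², 1, …, 1`.
-/

theorem mul_sum_vecMulVec_self_star_mul_conjTranspose {ι R p q : Type*} [NonUnitalSemiring R]
    [StarRing R] [Fintype q] (E : Matrix p q R) (s : Finset ι) (u : ι → q → R) :
    E * (∑ i ∈ s, vecMulVec (u i) (star (u i))) * Eᴴ
      = ∑ i ∈ s, vecMulVec (E *ᵥ u i) (star (E *ᵥ u i)) := by
  simp only [Matrix.mul_sum, Matrix.sum_mul, mul_vecMulVec, vecMulVec_mul, star_mulVec]

section Congruence

variable {K p q : Type*} [Field K] [PartialOrder K] [StarRing K] [StarOrderedRing K]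
  [Fintype p] [DecidableEq p] [Fintype q] [DecidableEq q]

theorem posSemidef_inv_sub_conj_inv_iff {A : Matrix p p K} {B : Matrix q q K}
    (hA : A.PosDef) (hB : B.PosDef) (E : Matrix p q K) :
    (B⁻¹ - Eᴴ * A⁻¹ * E).PosSemidef ↔ (A - E * B * Eᴴ).PosSemidef := by
  let := hA.isUnit.invertible
  let := hB.isUnit.invertible
  rw [← PosDef.fromBlocks₁₁ E B⁻¹ hA, PosDef.fromBlocks₂₂ A E hB.inv, inv_inv_of_invertible]

theorem posSemidef_smul_inv_sub_conj_inv {c : K} (hc : 0 < c) {A : Matrix p p K}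
    {B : Matrix q q K} {E : Matrix p q K} (hA : A.PosDef) (hB : B.PosDef)
    (h : (c • A - E * B * Eᴴ).PosSemidef) :
    (c • B⁻¹ - Eᴴ * A⁻¹ * E).PosSemidef := by
  have hinv : (c • A)⁻¹ = c⁻¹ • A⁻¹ :=
    inv_smul' A (Units.mk0 c hc.ne') ((isUnit_iff_isUnit_det A).mp hA.isUnit)
  have hcongr := (posSemidef_inv_sub_conj_inv_iff (hA.smul hc) hB E).mpr h
  simpa [hinv, smul_sub, smul_smul, hc.ne'] using hcongr.smul hc.le

theorem posSemidef_smul_one_sub_mul_conjTranspose_self {c : K} (hc : 0 < c)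
    {E : Matrix p q K} (hE : (c • 1 - Eᴴ * E).PosSemidef) :
    (c • 1 - E * Eᴴ).PosSemidef := by
  simpa using posSemidef_smul_inv_sub_conj_inv (E := Eᴴ) hc PosDef.one PosDef.one (by simpa)

theorem posSemidef_smul_inv_add_sub_conj_inv_add {c : K} (hc : 1 ≤ c)
    {P : Matrix p p K} {Q S : Matrix q q K} {E : Matrix p q K}
    (hP : P.PosDef) (hQ : Q.PosDef) (hS : S.PosSemidef)
    (hE : (c • P - E * Q * Eᴴ).PosSemidef) :
    (c • (Q + S)⁻¹ - Eᴴ * (P + E * S * Eᴴ)⁻¹ * E).PosSemidef := by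
  have hESE : (E * S * Eᴴ).PosSemidef := hS.mul_mul_conjTranspose_same E
  have hsplit : c • (P + E * S * Eᴴ) - E * (Q + S) * Eᴴ
      = (c • P - E * Q * Eᴴ) + (c - 1) • (E * S * Eᴴ) := by
    rw [Matrix.mul_add, Matrix.add_mul]
    module
  refine posSemidef_smul_inv_sub_conj_inv (zero_lt_one.trans_le hc) (hP.add_posSemidef hESE)
    (hQ.add_posSemidef hS) ?_
  exact hsplit ▸ hE.add (hESE.smul (sub_nonneg.mpr hc))

theorem posSemidef_smul_ridge_inv_sub_conj_ridge_inv {c lam : K} (hc : 1 ≤ c) (hlam : 0 < lam)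
    {S : Matrix q q K} {E : Matrix p q K} (hS : S.PosSemidef)
    (hE : (c • 1 - Eᴴ * E).PosSemidef) :
    (c • (lam • 1 + S)⁻¹ - Eᴴ * (lam • 1 + E * S * Eᴴ)⁻¹ * E).PosSemidef := by
  refine posSemidef_smul_inv_add_sub_conj_inv_add hc (PosDef.one.smul hlam)
    (PosDef.one.smul hlam) hS ?_
  have hEE := posSemidef_smul_one_sub_mul_conjTranspose_self (zero_lt_one.trans_le hc) hE
  simpa [smul_sub, smul_comm lam c] using hEE.smul hlam.le

theorem dotProduct_ridge_inv_mulVec_le {ι : Type*} {c lam : K} (hc : 1 ≤ c) (hlam : 0 < lam)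
    {E : Matrix p q K} (hE : (c • 1 - Eᴴ * E).PosSemidef)
    (s : Finset ι) (u : ι → q → K) (y : q → K) :
    star (E *ᵥ y) ⬝ᵥ
        ((lam • 1 + ∑ i ∈ s, vecMulVec (E *ᵥ u i) (star (E *ᵥ u i)))⁻¹ *ᵥ (E *ᵥ y))
      ≤ c * (star y ⬝ᵥ ((lam • 1 + ∑ i ∈ s, vecMulVec (u i) (star (u i)))⁻¹ *ᵥ y)) := by
  have hS : (∑ i ∈ s, vecMulVec (u i) (star (u i))).PosSemidef :=
    posSemidef_sum s fun i _ => posSemidef_vecMulVec_self_star (u i)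
  have hy := (posSemidef_smul_ridge_inv_sub_conj_ridge_inv hc hlam hS hE).dotProduct_mulVec_nonneg y
  rw [mul_sum_vecMulVec_self_star_mul_conjTranspose, sub_mulVec, dotProduct_sub, sub_nonneg] at hy
  simpa only [star_mulVec, smul_mulVec, dotProduct_smul, smul_eq_mul, dotProduct_mulVec,
    vecMul_vecMul, Matrix.mul_assoc] using hy

end Congruence

section HeadScaling

variable {R : Type*} {m : ℕ}

/-- The matrix of the linear map `(t, w) ↦ (t • a, w)`, which carries the vectors with leading
entry `1` to the vectors with leading block `a`. -/
def headSMulMatrix [Zero R] [One R] (a : Fin m → R) (n : ℕ) :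
    Matrix (Fin (m + n)) (Fin (n + 1)) R :=
  of (Fin.append (fun j => Fin.cons (a j) 0) (fun k => Fin.cons 0 (Pi.single k 1)))

theorem headSMulMatrix_mulVec_cons [CommSemiring R] {n : ℕ} (a : Fin m → R) (t : R)
    (w : Fin n → R) :
    headSMulMatrix a n *ᵥ (Fin.cons t w : Fin (n + 1) → R) = Fin.append (t • a) w := by
  ext i
  cases i using Fin.addCases <;>
    simp [headSMulMatrix, mulVec, dotProduct, Fin.sum_univ_succ, Pi.single_apply, mul_comm]

theorem conjTranspose_headSMulMatrix_mul_self [Semiring R] [StarRing R] (a : Fin m → R) (n : ℕ) :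
    (headSMulMatrix a n)ᴴ * headSMulMatrix a n = diagonal (Fin.cons (star a ⬝ᵥ a) 1) := by
  ext i j
  cases i using Fin.cases <;> cases j using Fin.cases <;>
    simp [headSMulMatrix, mul_apply, dotProduct, Fin.sum_univ_add, diagonal_apply,
      Pi.single_apply, apply_ite star, (Fin.succ_ne_zero _).symm]

theorem posSemidef_smul_one_sub_conjTranspose_headSMulMatrix_mul_self [Ring R] [StarRing R]
    [PartialOrder R] [StarOrderedRing R] {c : R} {a : Fin m → R} (hc : 1 ≤ c)
    (ha : star a ⬝ᵥ a ≤ c) (n : ℕ) :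
    (c • 1 - (headSMulMatrix a n)ᴴ * headSMulMatrix a n).PosSemidef := by
  rw [conjTranspose_headSMulMatrix_mul_self, smul_one_eq_diagonal, diagonal_sub]
  refine PosSemidef.diagonal fun i => ?_
  cases i using Fin.cases <;> simpa

end HeadScaling

/-- For `z̃_i = (a', z_i')'` and `z̄_i = (1, z_i')'`, and `ṽ = (a', v')'`,
`v̄ = (1, v')'`, we have
`ṽ'(λI + ∑ z̃_i z̃_i')⁻¹ ṽ ≤ max(1, ‖a‖²) · v̄'(λI + ∑ z̄_i z̄_i')⁻¹ v̄`. -/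
theorem stmt_11 (lam : ℝ) (hlam : 0 < lam) (n d1 d2 : ℕ)
    (hn : 1 ≤ n) (hd1 : 1 ≤ d1) (hd2 : 1 ≤ d2)
    (a : Fin d1 → ℝ) (z : Fin n → Fin d2 → ℝ) (v : Fin d2 → ℝ) :
    (Fin.append a v) ⬝ᵥ
        ((lam • (1 : Matrix (Fin (d1 + d2)) (Fin (d1 + d2)) ℝ)
            + ∑ i, vecMulVec (Fin.append a (z i)) (Fin.append a (z i)))⁻¹
          *ᵥ (Fin.append a v))
      ≤ max 1 (∑ j, (a j) ^ 2) *
        ((Fin.cons 1 v) ⬝ᵥ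
          ((lam • (1 : Matrix (Fin (d2 + 1)) (Fin (d2 + 1)) ℝ)
              + ∑ i, vecMulVec (Fin.cons 1 (z i)) (Fin.cons 1 (z i)))⁻¹
            *ᵥ (Fin.cons 1 v))) := by
  have ha : star a ⬝ᵥ a ≤ max 1 (∑ j, a j ^ 2) := by simp [dotProduct, sq]
  have hE := posSemidef_smul_one_sub_conjTranspose_headSMulMatrix_mul_self (le_max_left _ _) ha d2
  simpa only [headSMulMatrix_mulVec_cons, one_smul, star_trivial] using
    dotProduct_ridge_inv_mulVec_le (le_max_left _ _) hlam hE Finset.univ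
      (fun i => Fin.cons 1 (z i)) (Fin.cons 1 v)
end
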